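/- arXiv:1203.1764 — 11 statements merged into one kernel-verified Lean document; each statement's English description precedes it below -/
import Mathlib

section
/- Let q : ℤ × ℤ → (ℝ → ℝ), written q_n(j)(x), be differentiable in x, set h_n(j) := exp(q_{n+1}(j+1) − q_n(j)), and suppose q satisfies the semidiscrete Toda lattice q_{n,x}(j) − q_{n+1,x}(j) = h_n(j) − h_n(j−1) for all n ∈ ℤ and for j = −1 and j = 0. Define μ_n(x) := q_{n,x}(−1) + q_{n,x}(0) − h_n(0). Then μ_n = μ_{n+1} for all n ∈ ℤ (i.e. μ does not depend on n) if and only if the C-series cut-off constraint q_n(−1) − q_{n−1}(−2) = q_{n+1}(1) − q_n(0) holds for all n ∈ ℤ. -/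
/-- for a solution of the semidiscrete Toda lattice (at `j = −1, 0`),
the quantity `μₙ = qₙ,ₓ(−1) + qₙ,ₓ(0) − hₙ(0)` is independent of `n` if and only if
the C-series cut-off constraint `qₙ(−1) − q_{n−1}(−2) = q_{n+1}(1) − qₙ(0)` holds. -/
theorem c_series_constraint_iff_n_integral
    (q : ℤ → ℤ → ℝ → ℝ)
    (hq : ∀ n j, Differentiable ℝ (q n j))
    (h : ℤ → ℤ → ℝ → ℝ)
    (hh : ∀ n j x, h n j x = Real.exp (q (n + 1) (j + 1) x - q n j x))
    (toda : ∀ (n : ℤ), ∀ j ∈ ({-1, 0} : Set ℤ), ∀ x : ℝ,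
        deriv (q n j) x - deriv (q (n + 1) j) x = h n j x - h n (j - 1) x)
    (μ : ℤ → ℝ → ℝ)
    (hμ : ∀ n x, μ n x = deriv (q n (-1)) x + deriv (q n 0) x - h n 0 x) :
    (∀ (n : ℤ) (x : ℝ), μ n x = μ (n + 1) x) ↔
      (∀ (n : ℤ) (x : ℝ),
        q n (-1) x - q (n - 1) (-2) x = q (n + 1) 1 x - q n 0 x) := by
  have key : ∀ (n : ℤ) (x : ℝ), μ n x = μ (n + 1) x ↔
      q (n + 1) (-1) x - q n (-2) x = q (n + 1 + 1) 1 x - q (n + 1) 0 x := by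
    intro n x
    have h1 := toda n (-1) (by simp) x
    have h0 := toda n 0 (by simp) x
    have e2 := hh n (-2) x
    have e0 := hh (n + 1) 0 x
    have m0 := hμ n x
    have m1 := hμ (n + 1) x
    norm_num only at h1 h0 e2 e0
    rw [← Real.exp_eq_exp (x := q (n + 1) (-1) x - q n (-2) x), ← e2, ← e0]
    constructor <;> intro H <;> linarith
  constructor
  · intro H n x
    have := (key (n - 1) x).1 (H (n - 1) x)
    rwa [sub_add_cancel] at this
  · intro H n x
    have := H (n + 1) x
    rw [add_sub_cancel_right] at this
    exact (key n x).2 this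
end

section
/- Let q : ℤ × ℤ → (ℝ → ℝ) be differentiable in x, h_n(j) := exp(q_{n+1}(j+1) − q_n(j)), and suppose q satisfies the semidiscrete Toda lattice q_{n,x}(j) − q_{n+1,x}(j) = h_n(j) − h_n(j−1) for all n, j ∈ ℤ. Fix n, and let ψ : ℤ → (ℝ → ℝ) be differentiable and satisfy ψ_x(j) = q_{n,x}(j) ψ(j) + ψ(j+1) for all j ∈ ℤ. Then the function χ(j) := ψ(j) + h_n(j−1) ψ(j−1) satisfies χ_x(j) = q_{n+1,x}(j) χ(j) + χ(j+1) for all j ∈ ℤ. (That is, on solutions of the lattice, the discrete half of the Darboux–Laplace Lax pair ψ_{n+1}(j) = ψ_n(j) + h_n(j−1) ψ_n(j−1) is compatible with its continuous half.) -/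
/-- on solutions of the semidiscrete Toda lattice, the discrete half of
the Darboux–Laplace Lax pair `ψ_{n+1}(j) = ψₙ(j) + hₙ(j−1) ψₙ(j−1)` is compatible
with the continuous half `ψₓ(j) = qₙ,ₓ(j) ψ(j) + ψ(j+1)`. -/
theorem semidiscrete_lax_pair_compatibility
    (q : ℤ → ℤ → ℝ → ℝ)
    (hq : ∀ n j, Differentiable ℝ (q n j))
    (h : ℤ → ℤ → ℝ → ℝ)
    (hh : ∀ n j x, h n j x = Real.exp (q (n + 1) (j + 1) x - q n j x))
    (toda : ∀ (n j : ℤ) (x : ℝ),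
        deriv (q n j) x - deriv (q (n + 1) j) x = h n j x - h n (j - 1) x)
    (n : ℤ)
    (ψ : ℤ → ℝ → ℝ)
    (hψd : ∀ j, Differentiable ℝ (ψ j))
    (hψ : ∀ (j : ℤ) (x : ℝ),
        deriv (ψ j) x = deriv (q n j) x * ψ j x + ψ (j + 1) x)
    (χ : ℤ → ℝ → ℝ)
    (hχ : ∀ (j : ℤ) (x : ℝ), χ j x = ψ j x + h n (j - 1) x * ψ (j - 1) x) :
    ∀ (j : ℤ) (x : ℝ),
      deriv (χ j) x = deriv (q (n + 1) j) x * χ j x + χ (j + 1) x := by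
  intro j x
  have e1 : j - 1 + 1 = j := by ring
  have e2 : j + 1 - 1 = j := by ring
  have hH : HasDerivAt (h n (j - 1))
      (h n (j - 1) x * (deriv (q (n + 1) j) x - deriv (q n (j - 1)) x)) x := by
    have hfun : h n (j - 1) = fun y => Real.exp (q (n + 1) j y - q n (j - 1) y) := by
      funext y
      rw [hh, e1]
    rw [hfun]
    exact ((hq (n + 1) j x).hasDerivAt.sub (hq n (j - 1) x).hasDerivAt).exp
  have hX : χ j = fun y => ψ j y + h n (j - 1) y * ψ (j - 1) y := funext (hχ j)
  have hD := ((hψd j x).hasDerivAt.add (hH.mul (hψd (j - 1) x).hasDerivAt)).deriv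
  have hD' : deriv (χ j) x = deriv (ψ j) x +
      (h n (j - 1) x * (deriv (q (n + 1) j) x - deriv (q n (j - 1)) x) * ψ (j - 1) x
        + h n (j - 1) x * deriv (ψ (j - 1)) x) := by
    rw [hX]
    exact hD
  rw [hD', hχ j x, hχ (j + 1) x, hψ j x, hψ (j - 1) x, e1, e2]
  linear_combination ψ j x * toda n j x
end

section
/- Let q : ℤ × ℤ → (ℝ → ℝ) be differentiable in x, h_n(j) := exp(q_{n+1}(j+1) − q_n(j)), and suppose q satisfies the semidiscrete Toda lattice q_{n,x}(j) − q_{n+1,x}(j) = h_n(j) − h_n(j−1) for all n, j ∈ ℤ. Fix n, and let φ : ℤ → (ℝ → ℝ) be differentiable and satisfy φ_x(j) = exp(q_{n+1}(j) − q_{n+1}(j−1)) φ(j−1) − φ(j) for all j ∈ ℤ. Then the function χ(j) := −exp(q_n(j) − q_{n+1}(j)) φ(j) + φ(j+1) satisfies χ_x(j) = exp(q_n(j) − q_n(j−1)) χ(j−1) − χ(j) for all j ∈ ℤ. (That is, on solutions of the lattice, the second, inequivalent Darboux–Laplace Lax pair, with the discrete Darboux operator, is compatible.) -/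
/-- on solutions of the semidiscrete Toda lattice, the second
Darboux–Laplace Lax pair (with discrete Darboux operator) is compatible:
if `φₓ(j) = exp(q_{n+1}(j) − q_{n+1}(j−1)) φ(j−1) − φ(j)`, then
`χ(j) := −exp(qₙ(j) − q_{n+1}(j)) φ(j) + φ(j+1)` satisfies
`χₓ(j) = exp(qₙ(j) − qₙ(j−1)) χ(j−1) − χ(j)`. -/
theorem semidiscrete_second_lax_pair_compatibility
    (q : ℤ → ℤ → ℝ → ℝ)
    (hq : ∀ n j, Differentiable ℝ (q n j))
    (h : ℤ → ℤ → ℝ → ℝ)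
    (hh : ∀ n j x, h n j x = Real.exp (q (n + 1) (j + 1) x - q n j x))
    (toda : ∀ (n j : ℤ) (x : ℝ),
        deriv (q n j) x - deriv (q (n + 1) j) x = h n j x - h n (j - 1) x)
    (n : ℤ)
    (φ : ℤ → ℝ → ℝ)
    (hφd : ∀ j, Differentiable ℝ (φ j))
    (hφ : ∀ (j : ℤ) (x : ℝ),
        deriv (φ j) x
          = Real.exp (q (n + 1) j x - q (n + 1) (j - 1) x) * φ (j - 1) x - φ j x)
    (χ : ℤ → ℝ → ℝ)
    (hχ : ∀ (j : ℤ) (x : ℝ),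
        χ j x = -Real.exp (q n j x - q (n + 1) j x) * φ j x + φ (j + 1) x) :
    ∀ (j : ℤ) (x : ℝ),
      deriv (χ j) x = Real.exp (q n j x - q n (j - 1) x) * χ (j - 1) x - χ j x := by
  intro j x
  have hd : HasDerivAt (χ j)
      (-(Real.exp (q n j x - q (n + 1) j x) * (deriv (q n j) x - deriv (q (n + 1) j) x)) * φ j x
        + -Real.exp (q n j x - q (n + 1) j x) * deriv (φ j) x + deriv (φ (j + 1)) x) x := by
    have e : χ j = fun y => -Real.exp (q n j y - q (n + 1) j y) * φ j y + φ (j + 1) y :=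
      funext (hχ j)
    rw [e]
    exact ((((hq n j x).hasDerivAt.sub (hq (n + 1) j x).hasDerivAt).exp.neg.mul
      (hφd j x).hasDerivAt).add (hφd (j + 1) x).hasDerivAt)
  have e1 : Real.exp (q n j x - q (n + 1) j x) * Real.exp (q (n + 1) (j + 1) x - q n j x)
      = Real.exp (q (n + 1) (j + 1) x - q (n + 1) j x) := by
    rw [← Real.exp_add]; congr 1; ring
  have e2 : Real.exp (q n j x - q (n + 1) j x) * Real.exp (q (n + 1) j x - q n (j - 1) x)
      = Real.exp (q n j x - q n (j - 1) x) := by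
    rw [← Real.exp_add]; congr 1; ring
  have e3 : Real.exp (q n j x - q (n + 1) j x) * Real.exp (q (n + 1) j x - q (n + 1) (j - 1) x)
      = Real.exp (q n j x - q n (j - 1) x)
        * Real.exp (q n (j - 1) x - q (n + 1) (j - 1) x) := by
    rw [← Real.exp_add, ← Real.exp_add]; congr 1; ring
  rw [hd.deriv, toda, hφ, hφ, hχ, hχ, hh, hh]
  simp only [sub_add_cancel, add_sub_cancel_right]
  linear_combination (-φ j x) * e1 + φ j x * e2 - φ (j - 1) x * e3
end

section
/- Let q : ℤ → (ℝ² → ℝ) be C³ functions satisfying the two-dimensional Toda lattice q_{xy}(j) = h(j) − h(j−1), where h(j) := exp(q(j+1) − q(j)) and b(j) := q_x(j). Fix an integer k ≥ 2, and let B^{k−1}, B^{k}, B^{k+1} : ℤ → (ℝ² → ℝ) be C¹ functions satisfying: ∂_y B^{k}(j) = h(j) B^{k−1}(j+1) − h(j+k−1) B^{k−1}(j); ∂_y B^{k+1}(j) = h(j) B^{k}(j+1) − h(j+k) B^{k}(j); and ∂_x B^{k−1}(j) = B^{k−1}(j)(b(j+k−1) − b(j)) + B^{k}(j) − B^{k}(j−1),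 for all j. Then for all j ∈ ℤ: ∂_y[ B^{k}(j)(b(j+k) − b(j)) + B^{k+1}(j) − B^{k+1}(j−1) ] = ∂_x[ h(j) B^{k−1}(j+1) − h(j+k−1) B^{k−1}(j) ]. Hence the two defining equations for the nonlocal variable b^{(k)}(j) are compatible, the compatibility being provided by the first equation at level k+1. -/
/-- Partial derivative in the first (x) variable. -/
noncomputable def pdx (f : ℝ × ℝ → ℝ) : ℝ × ℝ → ℝ :=
  fun p => deriv (fun t => f (t, p.2)) p.1

/-- Partial derivative in the second (y) variable. -/
noncomputable def pdy (f : ℝ × ℝ → ℝ) : ℝ × ℝ → ℝ :=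
  fun p => deriv (fun t => f (p.1, t)) p.2

theorem hasDerivAt_pdx {f : ℝ × ℝ → ℝ} (hf : Differentiable ℝ f) (p : ℝ × ℝ) :
    HasDerivAt (fun t => f (t, p.2)) (pdx f p) p.1 := by
  have h : Differentiable ℝ (fun t : ℝ => f (t, p.2)) := by fun_prop
  exact (h p.1).hasDerivAt

theorem hasDerivAt_pdy {f : ℝ × ℝ → ℝ} (hf : Differentiable ℝ f) (p : ℝ × ℝ) :
    HasDerivAt (fun t => f (p.1, t)) (pdy f p) p.2 := by
  have h : Differentiable ℝ (fun t : ℝ => f (p.1, t)) := by fun_prop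
  exact (h p.2).hasDerivAt

theorem pdx_differentiable {f : ℝ × ℝ → ℝ} (hf : ContDiff ℝ 3 f) :
    Differentiable ℝ (pdx f) := by
  have hd : Differentiable ℝ f := hf.differentiable (by norm_num)
  have e : pdx f = fun p => fderiv ℝ f p (1, 0) := by
    funext p
    have h1 : HasDerivAt (fun t : ℝ => (t, p.2)) ((1 : ℝ), (0 : ℝ)) p.1 :=
      (hasDerivAt_id p.1).prodMk (hasDerivAt_const p.1 p.2)
    have h2 : HasFDerivAt f (fderiv ℝ f p) (p.1, p.2) := (hd p).hasFDerivAt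
    exact (h2.comp_hasDerivAt p.1 h1).deriv
  rw [e]
  have h3 : Differentiable ℝ (fderiv ℝ f) :=
    (hf.fderiv_right (m := 1) (by norm_num)).differentiable (by norm_num)
  exact fun p => (h3 p).clm_apply (differentiableAt_const _)

/-- compatibility of the two defining equations of the nonlocal
variable `b^{(k)}(j)` in Shabat's scheme for the 2D Toda lattice, provided by the
first equation at level `k+1`. Here `Bkm, Bk, Bkp` play the roles of
`b^{(k−1)}, b^{(k)}, b^{(k+1)}`. -/
theorem toda_nonlocal_variables_compatibility
    (q h b : ℤ → ℝ × ℝ → ℝ)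
    (hq : ∀ j, ContDiff ℝ 3 (q j))
    (hh : ∀ j p, h j p = Real.exp (q (j + 1) p - q j p))
    (hb : ∀ j, b j = pdx (q j))
    (toda : ∀ (j : ℤ) (p : ℝ × ℝ), pdy (pdx (q j)) p = h j p - h (j - 1) p)
    (k : ℤ) (hk : 2 ≤ k)
    (Bkm Bk Bkp : ℤ → ℝ × ℝ → ℝ)
    (hBkm : ∀ j, ContDiff ℝ 1 (Bkm j))
    (hBk : ∀ j, ContDiff ℝ 1 (Bk j))
    (hBkp : ∀ j, ContDiff ℝ 1 (Bkp j))
    (e1 : ∀ (j : ℤ) (p : ℝ × ℝ),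
        pdy (Bk j) p = h j p * Bkm (j + 1) p - h (j + k - 1) p * Bkm j p)
    (e2 : ∀ (j : ℤ) (p : ℝ × ℝ),
        pdy (Bkp j) p = h j p * Bk (j + 1) p - h (j + k) p * Bk j p)
    (e3 : ∀ (j : ℤ) (p : ℝ × ℝ),
        pdx (Bkm j) p = Bkm j p * (b (j + k - 1) p - b j p) + Bk j p - Bk (j - 1) p) :
    ∀ (j : ℤ) (p : ℝ × ℝ),
      pdy (fun s => Bk j s * (b (j + k) s - b j s) + Bkp j s - Bkp (j - 1) s) p
        = pdx (fun s => h j s * Bkm (j + 1) s - h (j + k - 1) s * Bkm j s) p := by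
  intro j p
  have dq : ∀ j, Differentiable ℝ (q j) := fun j => (hq j).differentiable (by norm_num)
  have dm : ∀ j, Differentiable ℝ (Bkm j) := fun j => (hBkm j).differentiable (by norm_num)
  have dk : ∀ j, Differentiable ℝ (Bk j) := fun j => (hBk j).differentiable (by norm_num)
  have dp : ∀ j, Differentiable ℝ (Bkp j) := fun j => (hBkp j).differentiable (by norm_num)
  have db : ∀ j, HasDerivAt (fun t => b j (p.1, t)) (h j p - h (j - 1) p) p.2 := by
    intro j
    rw [← toda j p, hb j]
    exact hasDerivAt_pdy (pdx_differentiable (hq j)) p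
  have dh : ∀ j, HasDerivAt (fun t => h j (t, p.2)) (h j p * (b (j + 1) p - b j p)) p.1 := by
    intro j
    have := ((hasDerivAt_pdx (dq (j + 1)) p).sub (hasDerivAt_pdx (dq j) p)).exp
    rw [hb, hb, hh]
    simp only [hh]
    exact this
  have L := ((((hasDerivAt_pdy (dk j) p).mul ((db (j + k)).sub (db j))).add
    (hasDerivAt_pdy (dp j) p)).sub (hasDerivAt_pdy (dp (j - 1)) p)).deriv
  have R := (((dh j).mul (hasDerivAt_pdx (dm (j + 1)) p)).sub
    ((dh (j + k - 1)).mul (hasDerivAt_pdx (dm j) p))).deriv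
  refine Eq.trans L (Eq.trans ?_ R.symm)
  simp only [e1, e2, e3, Pi.sub_apply, Prod.mk.eta]
  have a1 : j + 1 + k - 1 = j + k := by ring
  have a2 : j + 1 - 1 = j := by ring
  have a3 : j - 1 + k = j + k - 1 := by ring
  have a4 : j - 1 + 1 = j := by ring
  have a5 : j + k - 1 + 1 = j + k := by ring
  rw [a1, a2, a3, a4, a5]
  ring
end

section
/- Let q : ℤ → (ℝ² → ℝ) be C² functions satisfying the two-dimensional Toda lattice q_{xy}(j) = h(j) − h(j−1), where h(j) := exp(q(j+1) − q(j)) and b(j) := q_x(j), and let B¹ : ℤ → (ℝ² → ℝ) be C¹ functions satisfying ∂_y B¹(j) = ∂_x h(j) for all j. Then the density of the first integral I₂ is a telescoping y-derivative: for all j ∈ ℤ, ∂_y( b(j)² + 2 B¹(j) ) = G(j) − G(j−1), where G(j) := 2 h(j) b(j+1). Consequently the formal sum I₂ = Σ_j (b(j)² + 2 b^{(1)}(j)) is a y-integral of the Toda lattice. -/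
theorem aux_pdx_eq (f : ℝ × ℝ → ℝ) (hf : Differentiable ℝ f) :
    pdx f = fun p => fderiv ℝ f p (1, 0) := by
  funext p
  have h1 : HasDerivAt (fun t : ℝ => ((t, p.2) : ℝ × ℝ)) (1, 0) p.1 :=
    (hasDerivAt_id p.1).prodMk (hasDerivAt_const p.1 p.2)
  have h2 : HasFDerivAt f (fderiv ℝ f p) ((fun t : ℝ => ((t, p.2) : ℝ × ℝ)) p.1) :=
    (hf p).hasFDerivAt
  exact (h2.comp_hasDerivAt p.1 h1).deriv

theorem aux_pdx_diff (f : ℝ × ℝ → ℝ) (hf : ContDiff ℝ 2 f) :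
    Differentiable ℝ (pdx f) := by
  rw [aux_pdx_eq f (hf.differentiable (by norm_num))]
  have h1 : ContDiff ℝ 1 (fderiv ℝ f) := hf.fderiv_right (by norm_num)
  exact (h1.differentiable (by norm_num)).clm_apply (differentiable_const _)

/-- the density of the first integral `I₂ = Σⱼ (b(j)² + 2b⁽¹⁾(j))` is a
telescoping y-derivative: `∂_y(b(j)² + 2B¹(j)) = G(j) − G(j−1)` with `G(j) = 2h(j)b(j+1)`.
Hence `I₂` is a y-integral of the 2D Toda lattice. -/
theorem toda_first_integral_I2_telescopes
    (q h b : ℤ → ℝ × ℝ → ℝ)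
    (hq : ∀ j, ContDiff ℝ 2 (q j))
    (hh : ∀ j p, h j p = Real.exp (q (j + 1) p - q j p))
    (hb : ∀ j, b j = pdx (q j))
    (toda : ∀ (j : ℤ) (p : ℝ × ℝ), pdy (pdx (q j)) p = h j p - h (j - 1) p)
    (B1 : ℤ → ℝ × ℝ → ℝ)
    (hB1 : ∀ j, ContDiff ℝ 1 (B1 j))
    (e2 : ∀ (j : ℤ) (p : ℝ × ℝ), pdy (B1 j) p = pdx (h j) p)
    (G : ℤ → ℝ × ℝ → ℝ)
    (hG : ∀ j p, G j p = 2 * h j p * b (j + 1) p) :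
    ∀ (j : ℤ) (p : ℝ × ℝ),
      pdy (fun s => (b j s) ^ 2 + 2 * B1 j s) p = G j p - G (j - 1) p := by
  intro j p
  have hqd : ∀ i, Differentiable ℝ (q i) := fun i => (hq i).differentiable (by norm_num)
  have hx : ∀ i, HasDerivAt (fun t => q i (t, p.2)) (b i p) p.1 := by
    intro i
    rw [hb i]
    have h0 : DifferentiableAt ℝ (fun t => q i (t, p.2)) p.1 := by
      have := hqd i
      fun_prop
    exact h0.hasDerivAt
  have hhx : pdx (h j) p = h j p * (b (j + 1) p - b j p) := by
    have e : (fun t => h j (t, p.2)) =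
        fun t => Real.exp (q (j + 1) (t, p.2) - q j (t, p.2)) := by
      funext t
      exact hh j _
    unfold pdx
    rw [e, hh j p]
    exact ((hx (j + 1)).sub (hx j)).exp.deriv
  have hby : HasDerivAt (fun t => b j (p.1, t)) (h j p - h (j - 1) p) p.2 := by
    rw [← toda j p, hb j]
    have h0 : DifferentiableAt ℝ (fun t => pdx (q j) (p.1, t)) p.2 := by
      have := aux_pdx_diff (q j) (hq j)
      fun_prop
    exact h0.hasDerivAt
  have hBy : HasDerivAt (fun t => B1 j (p.1, t)) (h j p * (b (j + 1) p - b j p)) p.2 := by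
    rw [← hhx, ← e2 j p]
    have h0 : DifferentiableAt ℝ (fun t => B1 j (p.1, t)) p.2 := by
      have := (hB1 j).differentiable (by norm_num)
      fun_prop
    exact h0.hasDerivAt
  have key := ((hby.pow 2).add (hBy.const_mul 2)).deriv
  have goal1 : pdy (fun s => (b j s) ^ 2 + 2 * B1 j s) p = _ := key
  rw [goal1, hG, hG, sub_add_cancel]
  norm_num
  ring
end

section
/- Let q : ℤ → (ℝ² → ℝ) be C² functions satisfying the two-dimensional Toda lattice q_{xy}(j) = h(j) − h(j−1), where h(j) := exp(q(j+1) − q(j)) and b(j) := q_x(j), and let B¹, B² : ℤ → (ℝ² → ℝ) be C¹ functions satisfying ∂_y B¹(j) = ∂_x h(j) and ∂_y B²(j) = h(j) B¹(j+1) − h(j+1) B¹(j) for all j. Then the density of the first integral I₃ is a telescoping y-derivative: for all j ∈ ℤ, ∂_y( b(j)³ + 3 B¹(j)(b(j) + b(j+1)) + 3 B²(j) ) = G(j) − G(j−1), where G(j) := 3 h(j)( b(j+1)² + B¹(j+1) ). Consequently the formal sum I₃ = Σ_j ( b(j)³ + 3 b^{(1)}(j)(b(j)+b(j+1)) + 3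 b^{(2)}(j) ) is a y-integral of the Toda lattice. -/
/-- The x-derivative of a C² function is differentiable. -/
theorem differentiable_pdx {f : ℝ × ℝ → ℝ} (hf : ContDiff ℝ 2 f) :
    Differentiable ℝ (pdx f) := by
  have h0 : Differentiable ℝ f := hf.differentiable (by norm_num)
  have h1 : pdx f = fun p => fderiv ℝ f p (1, 0) := by
    funext p
    have hl : HasDerivAt (fun t : ℝ => (t, p.2)) ((1 : ℝ), (0 : ℝ)) p.1 :=
      (hasDerivAt_id p.1).prodMk (hasDerivAt_const p.1 p.2)
    have hc : HasFDerivAt f (fderiv ℝ f p) (p.1, p.2) := (h0 p).hasFDerivAt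
    exact (hc.comp_hasDerivAt p.1 hl).deriv
  rw [h1]
  have h2 : Differentiable ℝ (fderiv ℝ f) :=
    (hf.fderiv_right (m := 1) (by norm_num)).differentiable (by norm_num)
  fun_prop

/-- the density of the first integral
`I₃ = Σⱼ (b(j)³ + 3b⁽¹⁾(j)(b(j)+b(j+1)) + 3b⁽²⁾(j))` is a telescoping y-derivative:
`∂_y(b(j)³ + 3B¹(j)(b(j)+b(j+1)) + 3B²(j)) = G(j) − G(j−1)` with
`G(j) = 3h(j)(b(j+1)² + B¹(j+1))`. Hence `I₃` is a y-integral of the Toda lattice. -/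
theorem toda_first_integral_I3_telescopes
    (q h b : ℤ → ℝ × ℝ → ℝ)
    (hq : ∀ j, ContDiff ℝ 2 (q j))
    (hh : ∀ j p, h j p = Real.exp (q (j + 1) p - q j p))
    (hb : ∀ j, b j = pdx (q j))
    (toda : ∀ (j : ℤ) (p : ℝ × ℝ), pdy (pdx (q j)) p = h j p - h (j - 1) p)
    (B1 B2 : ℤ → ℝ × ℝ → ℝ)
    (hB1 : ∀ j, ContDiff ℝ 1 (B1 j))
    (hB2 : ∀ j, ContDiff ℝ 1 (B2 j))
    (e2 : ∀ (j : ℤ) (p : ℝ × ℝ), pdy (B1 j) p = pdx (h j) p)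
    (e4 : ∀ (j : ℤ) (p : ℝ × ℝ),
        pdy (B2 j) p = h j p * B1 (j + 1) p - h (j + 1) p * B1 j p)
    (G : ℤ → ℝ × ℝ → ℝ)
    (hG : ∀ j p, G j p = 3 * h j p * ((b (j + 1) p) ^ 2 + B1 (j + 1) p)) :
    ∀ (j : ℤ) (p : ℝ × ℝ),
      pdy (fun s => (b j s) ^ 3 + 3 * B1 j s * (b j s + b (j + 1) s) + 3 * B2 j s) p
        = G j p - G (j - 1) p := by
  intro j p
  have dq : ∀ j, Differentiable ℝ (q j) := fun j => (hq j).differentiable (by norm_num)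
  have db : ∀ j, Differentiable ℝ (b j) := fun j => by
    rw [hb]; exact differentiable_pdx (hq j)
  have yb : ∀ j, pdy (b j) p = h j p - h (j - 1) p := fun j => by rw [hb]; exact toda j p
  have xh : pdx (h j) p = h j p * (b (j + 1) p - b j p) := by
    have hf : h j = fun s => Real.exp (q (j + 1) s - q j s) := funext (hh j)
    rw [hb, hb, hf]
    exact (((hasDerivAt_pdx (dq (j + 1)) p).sub (hasDerivAt_pdx (dq j) p)).exp).deriv
  have b0 := hasDerivAt_pdy (db j) p
  have b1 := hasDerivAt_pdy (db (j + 1)) p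
  have c1 := hasDerivAt_pdy ((hB1 j).differentiable (by norm_num)) p
  have c2 := hasDerivAt_pdy ((hB2 j).differentiable (by norm_num)) p
  have key := (((b0.pow 3).add ((c1.const_mul 3).mul (b0.add b1))).add (c2.const_mul 3)).deriv
  refine Eq.trans key ?_
  rw [yb, yb, e2, e4, xh, hG, hG]
  simp only [add_sub_cancel_right, sub_add_cancel, Pi.add_apply, Prod.mk.eta]
  push_cast
  ring
end

section
/- Let q : ℤ × ℤ → (ℝ → ℝ), differentiable in x, satisfy the semidiscrete Toda lattice b_n(j) − b_{n+1}(j) = h_n(j) − h_n(j−1) for all n, j, where b_n(j) := q_{n,x}(j) and h_n(j) := exp(q_{n+1}(j+1) − q_n(j)). Fix an integer k ≥ 2 and let B^{k−1}, B^{k}, B^{k+1} : ℤ × ℤ → (ℝ → ℝ) be differentiable in x and satisfy: B^{k}_n(j) − B^{k}_{n+1}(j) = h_n(j) B^{k−1}_{n+1}(j+1) − h_{n+k−1}(j+k−1) B^{k−1}_{n+1}(j); B^{k+1}_n(j) − B^{k+1}_{n+1}(j) = h_n(j) B^{k}_{n+1}(j+1) − h_{n+k}(j+k) B^{k}_{n+1}(j);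 and ∂_x B^{k−1}_n(j) = B^{k−1}_n(j)( b_{n+k−1}(j+k−1) − b_n(j) ) + h_{n+k−2}(j+k−2)( B^{k−1}_n(j−1) − B^{k−1}_n(j) ) + B^{k}_n(j) − B^{k}_n(j−1), for all n, j. Then for all n, j: ∂_x[ h_n(j) B^{k−1}_{n+1}(j+1) − h_{n+k−1}(j+k−1) B^{k−1}_{n+1}(j) ] = R_n(j) − R_{n+1}(j), where R_n(j) := B^{k}_n(j)( b_{n+k}(j+k) − b_n(j) ) + h_{n+k−1}(j+k−1)( B^{k}_n(j−1) − B^{k}_n(j) ) + B^{k+1}_n(j) − B^{k+1}_n(j−1). Hence the two defining equations for the semidiscrete nonlocal variable b_n^{(k)}(j) are compatible, compatibility being provided by the first equation at level k+1. -/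
/-- compatibility of the two defining equations of the semidiscrete
nonlocal variable `bₙ⁽ᵏ⁾(j)`, provided by the first equation at level `k+1`.
Here `Bkm, Bk, Bkp` play the roles of `b⁽ᵏ⁻¹⁾, b⁽ᵏ⁾, b⁽ᵏ⁺¹⁾`, the difference
operator is `∂ₙ fₙ = fₙ − f_{n+1}`, and
`Rₙ(j) = Bᵏₙ(j)(b_{n+k}(j+k) − bₙ(j)) + h_{n+k−1}(j+k−1)(Bᵏₙ(j−1) − Bᵏₙ(j)) + Bᵏ⁺¹ₙ(j) − Bᵏ⁺¹ₙ(j−1)`. -/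
theorem semidiscrete_nonlocal_variables_compatibility
    (q h b : ℤ → ℤ → ℝ → ℝ)
    (hq : ∀ n j, Differentiable ℝ (q n j))
    (hh : ∀ n j x, h n j x = Real.exp (q (n + 1) (j + 1) x - q n j x))
    (hb : ∀ n j x, b n j x = deriv (q n j) x)
    (toda : ∀ (n j : ℤ) (x : ℝ),
        b n j x - b (n + 1) j x = h n j x - h n (j - 1) x)
    (k : ℤ) (hk : 2 ≤ k)
    (Bkm Bk Bkp : ℤ → ℤ → ℝ → ℝ)
    (hBkm : ∀ n j, Differentiable ℝ (Bkm n j))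
    (hBk : ∀ n j, Differentiable ℝ (Bk n j))
    (hBkp : ∀ n j, Differentiable ℝ (Bkp n j))
    (e1 : ∀ (n j : ℤ) (x : ℝ),
        Bk n j x - Bk (n + 1) j x
          = h n j x * Bkm (n + 1) (j + 1) x - h (n + k - 1) (j + k - 1) x * Bkm (n + 1) j x)
    (e2 : ∀ (n j : ℤ) (x : ℝ),
        Bkp n j x - Bkp (n + 1) j x
          = h n j x * Bk (n + 1) (j + 1) x - h (n + k) (j + k) x * Bk (n + 1) j x)
    (e3 : ∀ (n j : ℤ) (x : ℝ),
        deriv (Bkm n j) x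
          = Bkm n j x * (b (n + k - 1) (j + k - 1) x - b n j x)
            + h (n + k - 2) (j + k - 2) x * (Bkm n (j - 1) x - Bkm n j x)
            + Bk n j x - Bk n (j - 1) x)
    (R : ℤ → ℤ → ℝ → ℝ)
    (hR : ∀ (n j : ℤ) (x : ℝ),
        R n j x
          = Bk n j x * (b (n + k) (j + k) x - b n j x)
            + h (n + k - 1) (j + k - 1) x * (Bk n (j - 1) x - Bk n j x)
            + Bkp n j x - Bkp n (j - 1) x) :
    ∀ (n j : ℤ) (x : ℝ),
      deriv (fun t => h n j t * Bkm (n + 1) (j + 1) t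
          - h (n + k - 1) (j + k - 1) t * Bkm (n + 1) j t) x
        = R n j x - R (n + 1) j x := by
  intro n j x
  have hd : ∀ n j : ℤ, HasDerivAt (h n j) (h n j x * (b (n + 1) (j + 1) x - b n j x)) x := by
    intro n j
    have h1 := (((hq (n + 1) (j + 1)) x).hasDerivAt.sub ((hq n j) x).hasDerivAt).exp
    have h2 : h n j = fun t => Real.exp (q (n + 1) (j + 1) t - q n j t) := funext (hh n j)
    rw [hb, hb, h2]
    exact h1
  have hB : ∀ n j : ℤ, HasDerivAt (Bkm n j) (deriv (Bkm n j) x) x :=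
    fun n j => (hBkm n j x).hasDerivAt
  have key := (((hd n j).mul (hB (n + 1) (j + 1))).sub
    ((hd (n + k - 1) (j + k - 1)).mul (hB (n + 1) j))).deriv
  refine Eq.trans key ?_
  rw [e3, e3, hR, hR]
  linear_combination (norm := ring_nf)
    -(b (n + k) (j + k) x - b n j x - h (n + k - 1) (j + k - 1) x) * e1 n j x
    - h (n + k - 1) (j + k - 1) x * e1 n (j - 1) x
    - e2 n j x + e2 n (j - 1) x
    - Bk (n + 1) j x * (toda (n + k) (j + k) x - toda n j x)
    + h (n + k - 1) (j + k - 1) x * Bkm (n + 1) j x *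
      (toda (n + k - 1) (j + k - 1) x - toda n j x)
end

section
/- Let q : ℤ × ℤ → (ℝ → ℝ), differentiable in x, satisfy the semidiscrete Toda lattice b_n(j) − b_{n+1}(j) = h_n(j) − h_n(j−1), where b_n(j) := q_{n,x}(j) and h_n(j) := exp(q_{n+1}(j+1) − q_n(j)). Let B¹, B² : ℤ × ℤ → (ℝ → ℝ) be differentiable in x and satisfy, for all n, j: ∂_x b_n(j) = B¹_n(j) − B¹_n(j−1); B¹_n(j) − B¹_{n+1}(j) = ∂_x h_n(j); ∂_x B¹_n(j) = B¹_n(j)( b_{n+1}(j+1) − b_n(j) ) + h_n(j)( B¹_n(j−1) − B¹_n(j) ) + B²_n(j) − B²_n(j−1); and B²_n(j) − B²_{n+1}(j) = h_n(j) B¹_{n+1}(j+1) − h_{n+1}(j+1) B¹_{n+1}(j). Define F_n(j) := b_n(j)² + B¹_n(j) + B¹_n(j−1). Then for all n, j: ∂_x F_n(j) − ∂_x F_{n+1}(j) = h_n(j)( F_{n+1}(j+1) − F_n(j) ) − h_n(j−1)( F_{n+1}(j) − F_n(j−1) ). (This identity expresses that the flow q_{n,t}(j) = b_n(j)² + b_n^{(1)}(j)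 + b_n^{(1)}(j−1) defines a symmetry of the semidiscrete Toda lattice.) -/
/-- the flow `q_{n,t}(j) = bₙ(j)² + bₙ⁽¹⁾(j) + bₙ⁽¹⁾(j−1)` defines a
symmetry of the semidiscrete Toda lattice:
`∂ₓFₙ(j) − ∂ₓF_{n+1}(j) = hₙ(j)(F_{n+1}(j+1) − Fₙ(j)) − hₙ(j−1)(F_{n+1}(j) − Fₙ(j−1))`.
Here `B1, B2` play the roles of the nonlocal variables `b⁽¹⁾, b⁽²⁾`. -/
theorem semidiscrete_toda_second_order_symmetry
    (q h b : ℤ → ℤ → ℝ → ℝ)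
    (hq : ∀ n j, Differentiable ℝ (q n j))
    (hh : ∀ n j x, h n j x = Real.exp (q (n + 1) (j + 1) x - q n j x))
    (hb : ∀ n j x, b n j x = deriv (q n j) x)
    (toda : ∀ (n j : ℤ) (x : ℝ),
        b n j x - b (n + 1) j x = h n j x - h n (j - 1) x)
    (B1 B2 : ℤ → ℤ → ℝ → ℝ)
    (hB1 : ∀ n j, Differentiable ℝ (B1 n j))
    (hB2 : ∀ n j, Differentiable ℝ (B2 n j))
    (e1 : ∀ (n j : ℤ) (x : ℝ), HasDerivAt (b n j) (B1 n j x - B1 n (j - 1) x) x)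
    (e2 : ∀ (n j : ℤ) (x : ℝ), B1 n j x - B1 (n + 1) j x = deriv (h n j) x)
    (e3 : ∀ (n j : ℤ) (x : ℝ),
        deriv (B1 n j) x
          = B1 n j x * (b (n + 1) (j + 1) x - b n j x)
            + h n j x * (B1 n (j - 1) x - B1 n j x)
            + B2 n j x - B2 n (j - 1) x)
    (e4 : ∀ (n j : ℤ) (x : ℝ),
        B2 n j x - B2 (n + 1) j x
          = h n j x * B1 (n + 1) (j + 1) x - h (n + 1) (j + 1) x * B1 (n + 1) j x)
    (F : ℤ → ℤ → ℝ → ℝ)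
    (hF : ∀ n j x, F n j x = (b n j x) ^ 2 + B1 n j x + B1 n (j - 1) x) :
    ∀ (n j : ℤ) (x : ℝ),
      deriv (F n j) x - deriv (F (n + 1) j) x
        = h n j x * (F (n + 1) (j + 1) x - F n j x)
          - h n (j - 1) x * (F (n + 1) j x - F n (j - 1) x) := by
  have hx : ∀ (n j : ℤ) (x : ℝ),
      HasDerivAt (h n j) (h n j x * (b (n + 1) (j + 1) x - b n j x)) x := by
    intro n j x
    have hfun : h n j = fun y => Real.exp (q (n + 1) (j + 1) y - q n j y) :=
      funext (hh n j)
    rw [hb, hb, hh n j x, hfun]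
    exact (((hq (n + 1) (j + 1)) x).hasDerivAt.sub ((hq n j) x).hasDerivAt).exp
  have e2' : ∀ (n j : ℤ) (x : ℝ),
      B1 n j x - B1 (n + 1) j x = h n j x * (b (n + 1) (j + 1) x - b n j x) := by
    intro n j x
    rw [e2, (hx n j x).deriv]
  have dB : ∀ (n j : ℤ) (x : ℝ), deriv (B1 n j) x - deriv (B1 (n + 1) j) x
      = h n j x * (b (n + 1) (j + 1) x - b n j x) * (b (n + 1) (j + 1) x - b n j x)
        + h n j x * ((B1 (n + 1) (j + 1) x - B1 (n + 1) j x)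
          - (B1 n j x - B1 n (j - 1) x)) := by
    intro n j x
    have h1 : HasDerivAt (fun y => B1 n j y - B1 (n + 1) j y)
        (deriv (B1 n j) x - deriv (B1 (n + 1) j) x) x :=
      ((hB1 n j) x).hasDerivAt.sub ((hB1 (n + 1) j) x).hasDerivAt
    have h3 := e1 (n + 1) (j + 1) x
    rw [add_sub_cancel_right] at h3
    have h2 : HasDerivAt (fun y => h n j y * (b (n + 1) (j + 1) y - b n j y)) _ x :=
      (hx n j x).mul (h3.sub (e1 n j x))
    rw [funext (e2' n j)] at h1
    exact h1.unique h2
  have dF : ∀ (n j : ℤ) (x : ℝ), deriv (F n j) x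
      = 2 * b n j x * (B1 n j x - B1 n (j - 1) x)
        + deriv (B1 n j) x + deriv (B1 n (j - 1)) x := by
    intro n j x
    have h1 : HasDerivAt (fun y => (b n j y) ^ 2 + B1 n j y + B1 n (j - 1) y) _ x :=
      (((e1 n j x).pow 2).add ((hB1 n j) x).hasDerivAt).add
        ((hB1 n (j - 1)) x).hasDerivAt
    rw [funext (hF n j), h1.deriv]
    norm_num
  intro n j x
  have a1 := dB n j x
  have a2 := dB n (j - 1) x
  have c1 := e2' n j x
  have c2 := e2' n (j - 1) x
  have t := toda n j x
  simp only [dF, hF, add_sub_cancel_right, sub_add_cancel] at *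
  linear_combination a1 + a2 + 2 * b n j x * c1 - 2 * b (n + 1) j x * c2
    + 2 * (B1 (n + 1) j x - B1 n (j - 1) x) * t
end

section
/- Let q : ℤ × ℤ → (ℝ → ℝ), differentiable in x, satisfy the semidiscrete Toda lattice b_n(j) − b_{n+1}(j) = h_n(j) − h_n(j−1), where b_n(j) := q_{n,x}(j) and h_n(j) := exp(q_{n+1}(j+1) − q_n(j)). Let B¹, B², B³ : ℤ × ℤ → (ℝ → ℝ) be differentiable in x and satisfy, for all n, j: ∂_x b_n(j) = B¹_n(j) − B¹_n(j−1); B¹_n(j) − B¹_{n+1}(j) = ∂_x h_n(j); ∂_x B¹_n(j) = B¹_n(j)( b_{n+1}(j+1) − b_n(j) ) + h_n(j)( B¹_n(j−1) − B¹_n(j) ) + B²_n(j) − B²_n(j−1); B²_n(j) − B²_{n+1}(j) = h_n(j) B¹_{n+1}(j+1) − h_{n+1}(j+1) B¹_{n+1}(j); ∂_x B²_n(j) = B²_n(j)( b_{n+2}(j+2) − b_n(j) ) + h_{n+1}(j+1)( B²_n(j−1) − B²_n(j) ) + B³_n(j) − B³_n(j−1); and B³_n(j) − B³_{n+1}(j)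 = h_n(j) B²_{n+1}(j+1) − h_{n+2}(j+2) B²_{n+1}(j). Define F_n(j) := b_n(j)³ + B²_n(j) + B²_n(j−1) + B²_n(j−2) + B¹_n(j)(2 b_n(j) + b_n(j+1)) + B¹_n(j−1)(2 b_n(j) + b_n(j−1)) − B¹_n(j) h_n(j+1) − B¹_n(j−1) h_n(j) − B¹_n(j−2) h_n(j−1). Then for all n, j: ∂_x F_n(j) − ∂_x F_{n+1}(j) = h_n(j)( F_{n+1}(j+1) − F_n(j) ) − h_n(j−1)( F_{n+1}(j) − F_n(j−1) ). (This expresses that the third-order flow defines a symmetry of the semidiscrete Toda lattice.) -/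
/-- the third-order flow
`q_{n,t}(j) = bₙ(j)³ + bₙ⁽²⁾(j) + bₙ⁽²⁾(j−1) + bₙ⁽²⁾(j−2) + bₙ⁽¹⁾(j)(2bₙ(j)+bₙ(j+1)) + bₙ⁽¹⁾(j−1)(2bₙ(j)+bₙ(j−1)) − bₙ⁽¹⁾(j)hₙ(j+1) − bₙ⁽¹⁾(j−1)hₙ(j) − bₙ⁽¹⁾(j−2)hₙ(j−1)`
defines a symmetry of the semidiscrete Toda lattice. Here `B1, B2, B3` play the
roles of the nonlocal variables `b⁽¹⁾, b⁽²⁾, b⁽³⁾`. -/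
theorem semidiscrete_toda_third_order_symmetry
    (q h b : ℤ → ℤ → ℝ → ℝ)
    (hq : ∀ n j, Differentiable ℝ (q n j))
    (hh : ∀ n j x, h n j x = Real.exp (q (n + 1) (j + 1) x - q n j x))
    (hb : ∀ n j x, b n j x = deriv (q n j) x)
    (toda : ∀ (n j : ℤ) (x : ℝ),
        b n j x - b (n + 1) j x = h n j x - h n (j - 1) x)
    (B1 B2 B3 : ℤ → ℤ → ℝ → ℝ)
    (hB1 : ∀ n j, Differentiable ℝ (B1 n j))
    (hB2 : ∀ n j, Differentiable ℝ (B2 n j))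
    (hB3 : ∀ n j, Differentiable ℝ (B3 n j))
    (e1 : ∀ (n j : ℤ) (x : ℝ), HasDerivAt (b n j) (B1 n j x - B1 n (j - 1) x) x)
    (e2 : ∀ (n j : ℤ) (x : ℝ), B1 n j x - B1 (n + 1) j x = deriv (h n j) x)
    (e3 : ∀ (n j : ℤ) (x : ℝ),
        deriv (B1 n j) x
          = B1 n j x * (b (n + 1) (j + 1) x - b n j x)
            + h n j x * (B1 n (j - 1) x - B1 n j x)
            + B2 n j x - B2 n (j - 1) x)
    (e4 : ∀ (n j : ℤ) (x : ℝ),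
        B2 n j x - B2 (n + 1) j x
          = h n j x * B1 (n + 1) (j + 1) x - h (n + 1) (j + 1) x * B1 (n + 1) j x)
    (e5 : ∀ (n j : ℤ) (x : ℝ),
        deriv (B2 n j) x
          = B2 n j x * (b (n + 2) (j + 2) x - b n j x)
            + h (n + 1) (j + 1) x * (B2 n (j - 1) x - B2 n j x)
            + B3 n j x - B3 n (j - 1) x)
    (e6 : ∀ (n j : ℤ) (x : ℝ),
        B3 n j x - B3 (n + 1) j x
          = h n j x * B2 (n + 1) (j + 1) x - h (n + 2) (j + 2) x * B2 (n + 1) j x)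
    (F : ℤ → ℤ → ℝ → ℝ)
    (hF : ∀ n j x,
        F n j x = (b n j x) ^ 3 + B2 n j x + B2 n (j - 1) x + B2 n (j - 2) x
          + B1 n j x * (2 * b n j x + b n (j + 1) x)
          + B1 n (j - 1) x * (2 * b n j x + b n (j - 1) x)
          - B1 n j x * h n (j + 1) x
          - B1 n (j - 1) x * h n j x
          - B1 n (j - 2) x * h n (j - 1) x) :
    ∀ (n j : ℤ) (x : ℝ),
      deriv (F n j) x - deriv (F (n + 1) j) x
        = h n j x * (F (n + 1) (j + 1) x - F n j x)
          - h n (j - 1) x * (F (n + 1) j x - F n (j - 1) x) := by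
  intro n j x
  have dh : ∀ n j x, HasDerivAt (h n j) (h n j x * (b (n + 1) (j + 1) x - b n j x)) x := by
    intro n j x
    have e : h n j = fun x => Real.exp (q (n + 1) (j + 1) x - q n j x) := funext (hh n j)
    have := (((hq (n + 1) (j + 1)) x).hasDerivAt.sub ((hq n j) x).hasDerivAt).exp
    rw [hb, hb, hh]
    rw [e]
    exact this
  have dB1 : ∀ n j x, HasDerivAt (B1 n j) (B1 n j x * (b (n + 1) (j + 1) x - b n j x)
            + h n j x * (B1 n (j - 1) x - B1 n j x)
            + B2 n j x - B2 n (j - 1) x) x := by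
    intro n j x
    rw [← e3]
    exact ((hB1 n j) x).hasDerivAt
  have dB2 : ∀ n j x, HasDerivAt (B2 n j) (B2 n j x * (b (n + 1 + 1) (j + 2) x - b n j x)
            + h (n + 1) (j + 1) x * (B2 n (j - 1) x - B2 n j x)
            + B3 n j x - B3 n (j - 1) x) x := by
    intro n j x
    have h2 : n + 1 + 1 = n + 2 := by ring
    rw [h2, ← e5]
    exact ((hB2 n j) x).hasDerivAt
  have dG := fun (n j : ℤ) (x : ℝ) =>
    ((((((((((e1 n j x).pow 3).add (dB2 n j x)).add (dB2 n (j - 1) x)).add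
      (dB2 n (j - 2) x)).add
      ((dB1 n j x).mul (((e1 n j x).const_mul 2).add (e1 n (j + 1) x)))).add
      ((dB1 n (j - 1) x).mul (((e1 n j x).const_mul 2).add (e1 n (j - 1) x)))).sub
      ((dB1 n j x).mul (dh n (j + 1) x))).sub
      ((dB1 n (j - 1) x).mul (dh n j x))).sub
      ((dB1 n (j - 2) x).mul (dh n (j - 1) x))).deriv
  have dF := fun (n j : ℤ) (x : ℝ) =>
    (congrArg (fun f => deriv f x) (funext (hF n j))).trans (dG n j x)
  beta_reduce at dF
  have sb : ∀ n j, b (n + 1) j x = b n j x - h n j x + h n (j - 1) x := by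
    intro n j
    linarith [toda n j x]
  have sB1 : ∀ n j, B1 (n + 1) j x
      = B1 n j x - h n j x * (b (n + 1) (j + 1) x - b n j x) := by
    intro n j
    have := e2 n j x
    rw [(dh n j x).deriv] at this
    linarith
  have sB2 : ∀ n j, B2 (n + 1) j x = B2 n j x
      - (h n j x * B1 (n + 1) (j + 1) x - h (n + 1) (j + 1) x * B1 (n + 1) j x) := by
    intro n j
    linarith [e4 n j x]
  have sB3 : ∀ n j, B3 (n + 1) j x = B3 n j x
      - (h n j x * B2 (n + 1) (j + 1) x - h (n + 1 + 1) (j + 2) x * B2 (n + 1) j x) := by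
    intro n j
    have h2 : n + 1 + 1 = n + 2 := by ring
    rw [h2]
    linarith [e6 n j x]
  have i1 : ∀ j : ℤ, j - 1 - 1 = j - 2 := fun j => by ring
  have i2 : ∀ j : ℤ, j - 2 - 1 = j - 3 := fun j => by ring
  have i3 : ∀ j : ℤ, j - 1 + 1 = j := fun j => by ring
  have i4 : ∀ j : ℤ, j - 2 + 1 = j - 1 := fun j => by ring
  have i5 : ∀ j : ℤ, j - 3 + 1 = j - 2 := fun j => by ring
  have i6 : ∀ j : ℤ, j - 1 + 2 = j + 1 := fun j => by ring
  have i7 : ∀ j : ℤ, j - 2 + 2 = j := fun j => by ring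
  have i8 : ∀ j : ℤ, j - 3 + 2 = j - 1 := fun j => by ring
  have i9 : ∀ j : ℤ, j + 1 + 1 = j + 2 := fun j => by ring
  have i10 : ∀ j : ℤ, j + 1 - 1 = j := fun j => by ring
  have i11 : ∀ j : ℤ, j + 2 - 1 = j + 1 := fun j => by ring
  have i12 : ∀ j : ℤ, j + 2 + 1 = j + 3 := fun j => by ring
  have i13 : ∀ j : ℤ, j + 1 + 2 = j + 3 := fun j => by ring
  have i14 : ∀ j : ℤ, j + 1 - 2 = j - 1 := fun j => by ring
  have i15 : ∀ j : ℤ, j + 3 - 1 = j + 2 := fun j => by ring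
  have i16 : ∀ j : ℤ, j - 1 - 2 = j - 3 := fun j => by ring
  rw [dF, dF, hF, hF, hF, hF]
  generalize hm : n + 1 = m
  generalize hk : m + 1 = k
  generalize hl : k + 1 = l
  have sbm : ∀ j, b m j x = b n j x - h n j x + h n (j - 1) x := by
    intro j; rw [← hm]; exact sb n j
  have sbk : ∀ j, b k j x = b m j x - h m j x + h m (j - 1) x := by
    intro j; rw [← hk]; exact sb m j
  have sbl : ∀ j, b l j x = b k j x - h k j x + h k (j - 1) x := by
    intro j; rw [← hl]; exact sb k j
  have s1 : ∀ j, B1 m j x = B1 n j x - h n j x * (b m (j + 1) x - b n j x) := by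
    intro j; rw [← hm]; exact sB1 n j
  have s2 : ∀ j, B2 m j x = B2 n j x - (h n j x * B1 m (j + 1) x - h m (j + 1) x * B1 m j x) := by
    intro j; rw [← hm]; exact sB2 n j
  have s3 : ∀ j, B3 m j x = B3 n j x - (h n j x * B2 m (j + 1) x - h k (j + 2) x * B2 m j x) := by
    intro j; rw [← hk, ← hm]; exact sB3 n j
  clear hm hk hl
  simp only [Pi.pow_apply, Pi.add_apply, Pi.mul_apply, s3, s2, s1, sbl, sbk, sbm, i1, i2, i3, i4,
    i5, i6, i7, i8, i9, i10, i11, i12, i13, i14, i15, i16]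
  push_cast
  ring
end

section
/- Let q : ℤ × ℤ → (ℝ → ℝ), differentiable in x, satisfy the semidiscrete Toda lattice b_n(j) − b_{n+1}(j) = h_n(j) − h_n(j−1) (at least for j = −1 and all n), where b_n(j) := q_{n,x}(j) and h_n(j) := exp(q_{n+1}(j+1) − q_n(j)). Let B¹, B² satisfy, for all n and the relevant j: ∂_x b_n(j) = B¹_n(j) − B¹_n(j−1); B¹_n(j) − B¹_{n+1}(j) = ∂_x h_n(j); and B²_n(j) − B²_{n+1}(j) = h_n(j) B¹_{n+1}(j+1) − h_{n+1}(j+1) B¹_{n+1}(j). Define u_n := exp(−q_n(−2)), v_n := exp(q_{n+1}(−1)), r_n := B¹_n(−2), and s_n := B²_n(−2) + r_n( b_n(−1) − h_n(−1) ). Then for all n: r_n − r_{n+1} = ∂_x( u_n v_n ) and s_n − s_{n+1} = ∂_x( v_{n,x} u_n − (1/2)(u_n v_n)² ). (The difference derivatives of the boundary nonlocalities r_n and s_n are total x-derivatives.) -/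
/-- the difference derivatives of the boundary nonlocalities
`rₙ = bₙ⁽¹⁾(−2)` and `sₙ = bₙ⁽²⁾(−2) + rₙ(bₙ(−1) − hₙ(−1))` are total x-derivatives:
`rₙ − r_{n+1} = ∂ₓ(uₙvₙ)` and `sₙ − s_{n+1} = ∂ₓ(vₙ,ₓ uₙ − ½(uₙvₙ)²)`, where
`uₙ = exp(−qₙ(−2))`, `vₙ = exp(q_{n+1}(−1))`. Here `B1, B2` play the roles of
`b⁽¹⁾, b⁽²⁾`. -/
theorem semidiscrete_boundary_nonlocalities_left
    (q h b : ℤ → ℤ → ℝ → ℝ)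
    (hq : ∀ n j, Differentiable ℝ (q n j))
    (hh : ∀ n j x, h n j x = Real.exp (q (n + 1) (j + 1) x - q n j x))
    (hb : ∀ n j x, b n j x = deriv (q n j) x)
    (toda : ∀ (n : ℤ) (x : ℝ),
        b n (-1) x - b (n + 1) (-1) x = h n (-1) x - h n (-2) x)
    (B1 B2 : ℤ → ℤ → ℝ → ℝ)
    (e1 : ∀ (n j : ℤ) (x : ℝ), HasDerivAt (b n j) (B1 n j x - B1 n (j - 1) x) x)
    (e2 : ∀ (n j : ℤ) (x : ℝ), B1 n j x - B1 (n + 1) j x = deriv (h n j) x)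
    (e3 : ∀ (n j : ℤ) (x : ℝ),
        B2 n j x - B2 (n + 1) j x
          = h n j x * B1 (n + 1) (j + 1) x - h (n + 1) (j + 1) x * B1 (n + 1) j x)
    (u v r s : ℤ → ℝ → ℝ)
    (hu : ∀ n x, u n x = Real.exp (-(q n (-2) x)))
    (hv : ∀ n x, v n x = Real.exp (q (n + 1) (-1) x))
    (hr : ∀ n x, r n x = B1 n (-2) x)
    (hs : ∀ n x, s n x = B2 n (-2) x + r n x * (b n (-1) x - h n (-1) x)) :
    ∀ (n : ℤ) (x : ℝ),
      (r n x - r (n + 1) x = deriv (fun t => u n t * v n t) x)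
      ∧ (s n x - s (n + 1) x
          = deriv (fun t => deriv (v n) t * u n t - (1 / 2) * (u n t * v n t) ^ 2) x) := by
  intro n x
  have huv : ∀ t, u n t * v n t = h n (-2) t := by
    intro t
    rw [hu, hv, hh, ← Real.exp_add]
    norm_num
    ring
  have hvd : ∀ t, deriv (v n) t = v n t * b (n + 1) (-1) t := by
    intro t
    have h0 : v n = fun t => Real.exp (q (n + 1) (-1) t) := funext (hv n)
    rw [h0, hb]
    exact ((hq (n + 1) (-1) t).hasDerivAt.exp).deriv
  have hfun : (fun t => deriv (v n) t * u n t - (1 / 2) * (u n t * v n t) ^ 2)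
      = fun t => b (n + 1) (-1) t * h n (-2) t - (1 / 2) * (h n (-2) t) ^ 2 := by
    funext t
    rw [hvd, ← huv]
    ring
  have hH : HasDerivAt (h n (-2)) (deriv (h n (-2)) x) x := by
    have h0 : h n (-2) = fun t => Real.exp (q (n + 1) (-2 + 1) t - q n (-2) t) :=
      funext (hh n (-2))
    have hd : DifferentiableAt ℝ (h n (-2)) x := by
      rw [h0]
      exact ((hq _ _ x).sub (hq _ _ x)).exp
    exact hd.hasDerivAt
  have E2 := e2 n (-2) x
  constructor
  · rw [hr, hr, E2, funext huv]
  · have hD := ((e1 (n + 1) (-1) x).mul hH).sub ((hH.pow 2).const_mul (1 / 2 : ℝ))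
    rw [hfun]
    refine Eq.trans ?_ (HasDerivAt.deriv hD).symm
    have E3 := e3 n (-2) x
    have T := toda n x
    have T' : b n (-1) x - h n (-1) x = b (n + 1) (-1) x - h n (-2) x := by linarith
    norm_num at E3 ⊢
    rw [hs, hs, hr, hr, T', ← E2]
    linear_combination E3
end

section
/- Let q : ℤ × ℤ → (ℝ → ℝ), differentiable in x, satisfy the semidiscrete Toda lattice b_n(j) − b_{n+1}(j) = h_n(j) − h_n(j−1) (at least for j = 1 and all n), where b_n(j) := q_{n,x}(j) and h_n(j) := exp(q_{n+1}(j+1) − q_n(j)). Let B¹, B² satisfy, for all n and the relevant j: ∂_x b_n(j) = B¹_n(j) − B¹_n(j−1); B¹_n(j) − B¹_{n+1}(j) = ∂_x h_n(j); and B²_n(j) − B²_{n+1}(j) = h_n(j) B¹_{n+1}(j+1) − h_{n+1}(j+1) B¹_{n+1}(j). Define w_n := exp(−q_n(0)), z_n := exp(q_{n+1}(1)), ρ_n := B¹_n(0), and σ_n := B²_n(0) + ρ_n( b_n(1) − h_n(1) ). Then for all n: ρ_n − ρ_{n+1} = ∂_x( w_n z_n ) and σ_n − σ_{n+1} = ∂_x(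 z_{n,x} w_n − (1/2)(w_n z_n)² ). (The difference derivatives of the boundary nonlocalities ρ_n and σ_n are total x-derivatives.) -/
/-- the difference derivatives of the boundary nonlocalities
`ρₙ = bₙ⁽¹⁾(0)` and `σₙ = bₙ⁽²⁾(0) + ρₙ(bₙ(1) − hₙ(1))` are total x-derivatives:
`ρₙ − ρ_{n+1} = ∂ₓ(wₙzₙ)` and `σₙ − σ_{n+1} = ∂ₓ(zₙ,ₓ wₙ − ½(wₙzₙ)²)`, where
`wₙ = exp(−qₙ(0))`, `zₙ = exp(q_{n+1}(1))`. Here `B1, B2` play the roles of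
`b⁽¹⁾, b⁽²⁾`. -/
theorem semidiscrete_boundary_nonlocalities_right
    (q h b : ℤ → ℤ → ℝ → ℝ)
    (hq : ∀ n j, Differentiable ℝ (q n j))
    (hh : ∀ n j x, h n j x = Real.exp (q (n + 1) (j + 1) x - q n j x))
    (hb : ∀ n j x, b n j x = deriv (q n j) x)
    (toda : ∀ (n : ℤ) (x : ℝ),
        b n 1 x - b (n + 1) 1 x = h n 1 x - h n 0 x)
    (B1 B2 : ℤ → ℤ → ℝ → ℝ)
    (e1 : ∀ (n j : ℤ) (x : ℝ), HasDerivAt (b n j) (B1 n j x - B1 n (j - 1) x) x)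
    (e2 : ∀ (n j : ℤ) (x : ℝ), B1 n j x - B1 (n + 1) j x = deriv (h n j) x)
    (e3 : ∀ (n j : ℤ) (x : ℝ),
        B2 n j x - B2 (n + 1) j x
          = h n j x * B1 (n + 1) (j + 1) x - h (n + 1) (j + 1) x * B1 (n + 1) j x)
    (w z ρ σ : ℤ → ℝ → ℝ)
    (hw : ∀ n x, w n x = Real.exp (-(q n 0 x)))
    (hz : ∀ n x, z n x = Real.exp (q (n + 1) 1 x))
    (hρ : ∀ n x, ρ n x = B1 n 0 x)
    (hσ : ∀ n x, σ n x = B2 n 0 x + ρ n x * (b n 1 x - h n 1 x)) :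
    ∀ (n : ℤ) (x : ℝ),
      (ρ n x - ρ (n + 1) x = deriv (fun t => w n t * z n t) x)
      ∧ (σ n x - σ (n + 1) x
          = deriv (fun t => deriv (z n) t * w n t - (1 / 2) * (w n t * z n t) ^ 2) x) := by
  intro n x
  have hwz : (fun t => w n t * z n t) = h n 0 := by
    funext t
    rw [hw, hz, hh, ← Real.exp_add]
    congr 1
    simp only [zero_add]
    ring
  have hdz : ∀ t, deriv (z n) t = z n t * b (n + 1) 1 t := by
    intro t
    have h1 : z n = fun t => Real.exp (q (n + 1) 1 t) := funext (hz n)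
    have h2 := ((hq (n + 1) 1 t).hasDerivAt.exp).deriv
    rw [hb, hz, h1]
    exact h2
  have hdh : HasDerivAt (h n 0) (deriv (h n 0) x) x := by
    have h1 : h n 0 = fun t => Real.exp (q (n + 1) (0 + 1) t - q n 0 t) := funext (hh n 0)
    apply DifferentiableAt.hasDerivAt
    rw [h1]
    exact ((hq (n + 1) (0 + 1) x).sub (hq n 0 x)).exp
  have hfun : (fun t => deriv (z n) t * w n t - (1 / 2) * (w n t * z n t) ^ 2)
      = fun t => b (n + 1) 1 t * h n 0 t - (1 / 2) * (h n 0 t) ^ 2 := by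
    funext t
    have h1 : h n 0 t = w n t * z n t := (congrFun hwz t).symm
    rw [hdz, h1]
    ring
  have hE2 := e2 n 0 x
  refine ⟨by rw [hwz, hρ, hρ, hE2], ?_⟩
  have hd := ((e1 (n + 1) 1 x).mul hdh).sub ((hdh.pow 2).const_mul (1 / 2 : ℝ))
  have hd2 : deriv (fun t => b (n + 1) 1 t * h n 0 t - (1 / 2) * (h n 0 t) ^ 2) x = _ := hd.deriv
  rw [hfun, hd2, hσ, hσ, hρ, hρ, ← hE2]
  have h3 := e3 n 0 x
  have ht := toda n x
  simp only [zero_add, sub_self] at h3 ⊢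
  push_cast
  have ht' : b n 1 x = b (n + 1) 1 x + h n 1 x - h n 0 x := by linarith
  rw [ht']
  linear_combination h3
end
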